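/- arXiv:1106.4737 — 2 statements merged into one kernel-verified Lean document; each statement's English description precedes it below -/
import Mathlib

section
/- Let Λ(t) be the explicit real symmetric 4×4 matrix described in the context and set Y(t) := t⁵·Λ(t)⁻¹ for t > 0 small enough that Λ(t) is invertible; Y(t) is real symmetric, so it has four real eigenvalues counted with multiplicity, which may be listed in decreasing order as λ₁(t) ≥ λ₂(t) ≥ λ₃(t) ≥ λ₄(t). Then there exist δ > 0 and C > 0 such that for all t ∈ (0, δ): |λ₁(t) − 8640| ≤ C·t, |λ₂(t) − 6t³| ≤ C·t⁴, |λ₃(t) − t⁴/3| ≤ C·t⁵, and |λ₄(t) − 3t⁵/8| ≤ C·t⁶. -/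
set_option autoImplicit false
open Real Matrix


noncomputable def dd (t : ℝ) : ℝ := 1 - 2*t + t^2 - Real.exp t

noncomputable def NN (t : ℝ) : Matrix (Fin 4) (Fin 4) ℝ :=
  !![-2*Real.exp t + 2 - 2*t^2 + t^3, t*(t-2),
     4*t*Real.exp t - 4*t + 3*t^2 - t^3 - t^2*Real.exp t - 2*Real.exp t + 2, t*(t-1-Real.exp t);
     t*(t-2), -Real.exp t + 1 - t + t^2, t*(t-1-Real.exp t), -Real.exp t + 1 - t;
     4*t*Real.exp t - 4*t + 3*t^2 - t^3 - t^2*Real.exp t - 2*Real.exp t + 2, t*(t-1-Real.exp t),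
     Real.exp t * (-2*Real.exp t + 2 - 2*t^2 + t^3), t*(t-2)*Real.exp t;
     t*(t-1-Real.exp t), -Real.exp t + 1 - t, t*(t-2)*Real.exp t,
     Real.exp t * (-Real.exp t + 1 - t + t^2)]

noncomputable def Lam (t : ℝ) : Matrix (Fin 4) (Fin 4) ℝ := (1 / dd t) • NN t

/-- `Y(t) = t⁵ Λ(t)⁻¹`. -/
noncomputable def Y (t : ℝ) : Matrix (Fin 4) (Fin 4) ℝ := t^5 • (Lam t)⁻¹

open Filter Topology Asymptotics Finset

/-!
The eigenvalues of `Y = t⁵ Λ⁻¹` are the roots `x` of `det (x Λ - t⁵)`. Modulo `d` the matrix `N` has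
rank one, so every minor of `N` of size `j` is divisible by `dʲ⁻¹`, and
`d det (x Λ - t⁵) = ∑ⱼ cⱼ(t) xʲ`, where each `cⱼ` is a power of `t` times an exponential polynomial.
Taylor expansion gives the orders of vanishing `21, 16, 12, 9, 9` of `c₀, …, c₄` at `t = 0`.
Their Newton polygon has four edges of width one, with slopes `-5, -4, -3, 0`. After the
substitution `x = tᵉ y` dictated by an edge, the polynomial is an `O(t)` perturbation of one with a
single nonzero root, which is simple and hence persists with an error `O(t)`. The four branches have
distinct orders, so they are distinct for small `t` and exhaust the spectrum.
-/

theorem charpoly_eq_prod_of_injective {ι n K : Type*} [Fintype ι] [Fintype n] [DecidableEq n]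
    [Field K] {M : Matrix n n K} {r : ι → K} (hcard : Fintype.card ι = Fintype.card n)
    (hr : Function.Injective r) (hroot : ∀ i, M.charpoly.IsRoot (r i)) :
    M.charpoly = ∏ i, (Polynomial.X - Polynomial.C (r i)) := by
  have hdeg : M.charpoly.degree = #(univ : Finset ι) := by
    rw [Matrix.charpoly_degree_eq_dim, card_univ, hcard]
  rw [← Lagrange.nodal_eq]
  refine Polynomial.eq_of_degree_le_of_eval_index_eq univ hr.injOn hdeg.le
    (hdeg.trans Lagrange.degree_nodal.symm) ?_ fun i hi ↦ ?_
  · rw [M.charpoly_monic.leadingCoeff, Lagrange.nodal_monic.leadingCoeff]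
  · rw [hroot i, Lagrange.eval_nodal_at_node hi]

theorem eval_charpoly_smul_inv_mul_det {n R : Type*} [Fintype n] [DecidableEq n] [CommRing R]
    {A : Matrix n n R} (hA : IsUnit A) (s x : R) :
    (s • A⁻¹).charpoly.eval x * A.det = (x • A - s • 1).det := by
  rw [Matrix.eval_charpoly, ← Matrix.det_mul, sub_mul, Matrix.smul_mul,
    Matrix.nonsing_inv_mul _ ((Matrix.isUnit_iff_isUnit_det A).1 hA), Matrix.scalar_apply,
    ← Matrix.smul_eq_diagonal_mul]

section PerturbedRoots

theorem exists_eq_zero_of_abs_sub_sub_le {φ : ℝ → ℝ} {y₀ ε : ℝ} (hε : 0 ≤ ε)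
    (hφ : ContinuousOn φ (Set.Icc (y₀ - ε) (y₀ + ε)))
    (h : ∀ y ∈ Set.Icc (y₀ - ε) (y₀ + ε), |φ y - (y - y₀)| ≤ ε) :
    ∃ y ∈ Set.Icc (y₀ - ε) (y₀ + ε), φ y = 0 := by
  have hle : y₀ - ε ≤ y₀ + ε := by linarith
  have hleft : φ (y₀ - ε) ≤ 0 := by linarith [(abs_le.1 (h _ (Set.left_mem_Icc.2 hle))).2]
  have hright : 0 ≤ φ (y₀ + ε) := by linarith [(abs_le.1 (h _ (Set.right_mem_Icc.2 hle))).1]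
  exact intermediate_value_Icc hle hφ ⟨hleft, hright⟩

variable {α : Type*} {l : Filter α}

theorem exists_root_isBigO_of_hasDerivAt {F : α → ℝ → ℝ} {F₀ : ℝ → ℝ} {D y₀ : ℝ}
    {ε : α → ℝ} (hε : Tendsto ε l (𝓝 0)) (hF : ∀ a, Continuous (F a))
    (hF₀ : HasDerivAt F₀ D y₀) (hD : D ≠ 0) (hy₀ : F₀ y₀ = 0)
    (hFF₀ : (fun p : α × ℝ ↦ F p.1 p.2 - F₀ p.2) =O[l ×ˢ 𝓝 y₀] fun p ↦ ε p.1) :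
    ∃ y : α → ℝ, (fun a ↦ y a - y₀) =O[l] ε ∧ ∀ᶠ a in l, F a (y a) = 0 := by
  obtain ⟨C, hC, hbound⟩ := hFF₀.exists_pos
  have hD' : 0 < |D| := abs_pos.2 hD
  have hlin : ∀ᶠ y in 𝓝 y₀, |F₀ y - D * (y - y₀)| ≤ |D| / 2 * |y - y₀| := by
    simpa [hy₀, mul_comm D] using hF₀.isLittleO.def (half_pos hD')
  obtain ⟨P, hP, Q, hQ, hPQ⟩ := eventually_prod_iff.1 (hbound.bound.and (hlin.prod_inr l))
  -- At this radius `F a - F₀` and the nonlinear part of `F₀` each contribute at most `|D| ρ / 2`.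
  set ρ : α → ℝ := fun a ↦ 2 * C / |D| * |ε a| with hρ
  have hρ_nonneg : ∀ a, 0 ≤ ρ a := fun a ↦ by positivity
  have hρ_tendsto : Tendsto ρ l (𝓝 0) := by simpa using hε.abs.const_mul (2 * C / |D|)
  have hI : Tendsto (fun a ↦ Set.Icc (y₀ - ρ a) (y₀ + ρ a)) l (𝓝 y₀).smallSets :=
    Tendsto.Icc (by simpa using hρ_tendsto.const_sub y₀) (by simpa using hρ_tendsto.const_add y₀)
  have hroot : ∀ᶠ a in l, ∃ y, |y - y₀| ≤ ρ a ∧ F a y = 0 := by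
    filter_upwards [hP, hI.eventually hQ.smallSets] with a hPa hQa
    obtain ⟨y, hy, hzero⟩ := exists_eq_zero_of_abs_sub_sub_le (φ := fun y ↦ F a y / D)
      (hρ_nonneg a) ((hF a).div_const D).continuousOn fun y hy ↦ by
        obtain ⟨hclose, hlin_y⟩ := hPQ hPa (hQa y hy)
        have hyρ : |y - y₀| ≤ ρ a := abs_sub_le_iff.2 ⟨by linarith [hy.2], by linarith [hy.1]⟩
        calc |F a y / D - (y - y₀)|
            = |(F a y - F₀ y) + (F₀ y - D * (y - y₀))| / |D| := by
              rw [← abs_div]; congr 1; field_simp; ring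
          _ ≤ (C * |ε a| + |D| / 2 * ρ a) / |D| := by
              gcongr
              exact (abs_add_le _ _).trans (add_le_add hclose (hlin_y.trans (by gcongr)))
          _ = ρ a := by rw [hρ]; field_simp; ring
    exact ⟨y, abs_sub_le_iff.2 ⟨by linarith [hy.2], by linarith [hy.1]⟩,
      (div_eq_zero_iff.1 hzero).resolve_right hD⟩
  obtain ⟨y, hy⟩ := skolem.1 hroot
  exact ⟨y, .of_bound _ (hy.mono fun a ha ↦ ha.1), hy.mono fun a ha ↦ ha.2⟩

theorem exists_root_isBigO_of_coeff_isBigO {n : ℕ} {a : Fin n → α → ℝ} {b : Fin n → ℝ}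
    {D y₀ : ℝ} {ε : α → ℝ} (hε : Tendsto ε l (𝓝 0)) (hab : ∀ j, (fun t ↦ a j t - b j) =O[l] ε)
    (hderiv : HasDerivAt (fun y ↦ ∑ j, b j * y ^ (j : ℕ)) D y₀) (hD : D ≠ 0)
    (hy₀ : ∑ j, b j * y₀ ^ (j : ℕ) = 0) :
    ∃ y : α → ℝ, (fun t ↦ y t - y₀) =O[l] ε ∧ ∀ᶠ t in l, ∑ j, a j t * y t ^ (j : ℕ) = 0 := by
  refine exists_root_isBigO_of_hasDerivAt (F := fun t y ↦ ∑ j, a j t * y ^ (j : ℕ)) hε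
    (fun t ↦ by fun_prop) hderiv hD hy₀ ?_
  simp only [← sum_sub_distrib, ← sub_mul]
  refine .fun_sum fun j _ ↦ ?_
  have hpow : (fun p : α × ℝ ↦ p.2 ^ (j : ℕ)) =O[l ×ˢ 𝓝 y₀] fun _ ↦ (1 : ℝ) :=
    (tendsto_snd.pow j).isBigO_one ℝ
  simpa using ((hab j).comp_tendsto tendsto_fst).mul hpow

end PerturbedRoots

/-- `f` has the expansion `f t = A tᵐ + O(tᵐ⁺¹)` as `t → 0⁺`. The coefficient `A` may be zero, so
that the condition can also record a mere bound on the order of `f`. -/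
def HasLeadingTerm (f : ℝ → ℝ) (A : ℝ) (m : ℕ) : Prop :=
  (fun t ↦ f t - A * t ^ m) =O[𝓝[>] 0] fun t ↦ t ^ (m + 1)

namespace HasLeadingTerm

variable {f g : ℝ → ℝ} {A B : ℝ} {m n : ℕ}

theorem of_lt (hf : HasLeadingTerm f A m) (hnm : n < m) : HasLeadingTerm f 0 n := by
  have hpow : ∀ k, n + 1 ≤ k → (fun t : ℝ ↦ t ^ k) =O[𝓝[>] 0] fun t ↦ t ^ (n + 1) := by
    intro k hk
    rcases hk.eq_or_lt with rfl | hlt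
    · exact isBigO_refl _ _
    · exact (isLittleO_pow_pow hlt).isBigO.mono nhdsWithin_le_nhds
  simpa [HasLeadingTerm] using
    (IsBigO.trans hf (hpow (m + 1) (by omega))).add ((hpow m hnm).const_mul_left A)

theorem const_mul_pow_mul (hf : HasLeadingTerm f A m) (c : ℝ) (k : ℕ) :
    HasLeadingTerm (fun t ↦ c * t ^ k * f t) (c * A) (k + m) := by
  refine (((isBigO_refl (fun t : ℝ ↦ t ^ k) _).mul hf).const_mul_left c).congr
    (fun t ↦ ?_) fun t ↦ ?_ <;> ring

theorem isBigO_div_pow_sub (hf : HasLeadingTerm f A m) :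
    (fun t ↦ f t / t ^ m - A) =O[𝓝[>] 0] fun t ↦ t := by
  refine (IsBigO.mul hf (isBigO_refl (fun t : ℝ ↦ (t ^ m)⁻¹) _)).congr' ?_ ?_ <;>
    filter_upwards [self_mem_nhdsWithin] with t (ht : 0 < t)
  · field_simp
  · field_simp
    ring

theorem tendsto_div_pow (hf : HasLeadingTerm f A m) :
    Tendsto (fun t ↦ f t / t ^ m) (𝓝[>] 0) (𝓝 A) := by
  rw [← tendsto_sub_nhds_zero_iff]
  exact hf.isBigO_div_pow_sub.trans_tendsto nhdsWithin_le_nhds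

theorem eventually_ne_zero (hf : HasLeadingTerm f A m) (hA : A ≠ 0) :
    ∀ᶠ t in 𝓝[>] 0, f t ≠ 0 :=
  (hf.tendsto_div_pow.eventually_ne hA).mono fun _ ht hft ↦ ht (by simp [hft])

theorem eventually_lt (hf : HasLeadingTerm f A m) (hg : HasLeadingTerm g B n) (hA : 0 < A)
    (hmn : m < n) : ∀ᶠ t in 𝓝[>] 0, g t < f t := by
  filter_upwards [(hg.of_lt hmn).tendsto_div_pow.eventually_lt hf.tendsto_div_pow hA,
    self_mem_nhdsWithin] with t hlt ht
  exact (div_lt_div_iff_of_pos_right (pow_pos ht m)).1 hlt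

theorem eventually_strictAnti {ι : Type*} [Finite ι] [Preorder ι] {x : ι → ℝ → ℝ} {A : ι → ℝ}
    {m : ι → ℕ} (hx : ∀ i, HasLeadingTerm (x i) (A i) (m i)) (hA : ∀ i, 0 < A i)
    (hm : StrictMono m) : ∀ᶠ t in 𝓝[>] 0, StrictAnti (x · t) := by
  have h : ∀ i j, i < j → ∀ᶠ t in 𝓝[>] 0, x j t < x i t := fun i j hij ↦
    (hx i).eventually_lt (hx j) (hA i) (hm hij)
  simpa only [StrictAnti, eventually_all] using h

theorem exists_abs_sub_le {ι : Type*} [Finite ι] {x : ι → ℝ → ℝ} {A : ι → ℝ} {m : ι → ℕ}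
    (hx : ∀ i, HasLeadingTerm (x i) (A i) (m i)) :
    ∃ C > 0, ∀ᶠ t in 𝓝[>] 0, ∀ i, |x i t - A i * t ^ m i| ≤ C * t ^ (m i + 1) := by
  choose K hK using fun i ↦ (hx i).bound
  obtain ⟨C, hC⟩ := (Set.finite_range K).bddAbove
  refine ⟨max C 1, by positivity, ?_⟩
  filter_upwards [eventually_all.2 hK, self_mem_nhdsWithin] with t hKt (ht : 0 < t) i
  have hKC : K i ≤ max C 1 := (hC ⟨i, rfl⟩).trans (le_max_left _ _)
  calc |x i t - A i * t ^ m i| ≤ K i * ‖t ^ (m i + 1)‖ := hKt i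
    _ ≤ max C 1 * t ^ (m i + 1) := by rw [Real.norm_of_nonneg (by positivity)]; gcongr

end HasLeadingTerm

theorem exists_root_hasLeadingTerm {n : ℕ} {c : Fin n → ℝ → ℝ} {b : Fin n → ℝ} {D y₀ : ℝ}
    {e N : ℕ} (hc : ∀ j : Fin n, HasLeadingTerm (fun t ↦ t ^ (e * (j : ℕ)) * c j t) (b j) N)
    (hderiv : HasDerivAt (fun y ↦ ∑ j, b j * y ^ (j : ℕ)) D y₀) (hD : D ≠ 0)
    (hy₀ : ∑ j, b j * y₀ ^ (j : ℕ) = 0) :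
    ∃ x : ℝ → ℝ, HasLeadingTerm x y₀ e ∧ ∀ᶠ t in 𝓝[>] 0, ∑ j, c j t * x t ^ (j : ℕ) = 0 := by
  obtain ⟨y, hy, hroot⟩ := exists_root_isBigO_of_coeff_isBigO
    (a := fun j t ↦ t ^ (e * (j : ℕ)) * c j t / t ^ N) (tendsto_id'.2 nhdsWithin_le_nhds)
    (fun j ↦ (hc j).isBigO_div_pow_sub) hderiv hD hy₀
  refine ⟨fun t ↦ t ^ e * y t, ?_, ?_⟩
  · refine ((isBigO_refl (fun t : ℝ ↦ t ^ e) _).mul hy).congr (fun t ↦ ?_) fun t ↦ ?_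
    · ring
    · rw [pow_succ, id]
  · filter_upwards [hroot, self_mem_nhdsWithin] with t hroot_t (ht : 0 < t)
    calc ∑ j, c j t * (t ^ e * y t) ^ (j : ℕ)
        = t ^ N * ∑ j : Fin n, t ^ (e * (j : ℕ)) * c j t / t ^ N * y t ^ (j : ℕ) := by
          rw [mul_sum]
          refine sum_congr rfl fun j _ ↦ ?_
          rw [mul_pow, pow_mul]
          field_simp
      _ = 0 := by rw [hroot_t, mul_zero]

theorem exists_root_of_newtonPolygon_edge {n : ℕ} {c : Fin (n + 1) → ℝ → ℝ} {A : Fin (n + 1) → ℝ}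
    {m : Fin (n + 1) → ℕ} (hc : ∀ j, HasLeadingTerm (c j) (A j) (m j)) {k : Fin n} {e : ℕ}
    (hleft : A k.castSucc ≠ 0) (hright : A k.succ ≠ 0) (hslope : m k.castSucc = m k.succ + e)
    (habove : ∀ j, j ≠ k.castSucc → j ≠ k.succ → m k.castSucc + e * k < m j + e * j) :
    ∃ x : ℝ → ℝ, HasLeadingTerm x (-A k.castSucc / A k.succ) e ∧
      ∀ᶠ t in 𝓝[>] 0, ∑ j, c j t * x t ^ (j : ℕ) = 0 := by
  set y₀ := -A k.castSucc / A k.succ with hy₀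
  have hlin : A k.castSucc + A k.succ * y₀ = 0 := by rw [hy₀]; field_simp; ring
  have hy₀_ne : y₀ ≠ 0 := div_ne_zero (neg_ne_zero.2 hleft) hright
  set b : Fin (n + 1) → ℝ := fun j ↦ if j = k.castSucc ∨ j = k.succ then A j else 0 with hb
  have hedge : ∀ y, ∑ j, b j * y ^ (j : ℕ) = y ^ (k : ℕ) * (A k.castSucc + A k.succ * y) := by
    intro y
    rw [sum_eq_add k.castSucc k.succ k.castSucc_lt_succ.ne (fun j _ hj ↦ by simp [hb, hj]) (by simp)
      (by simp)]
    simp only [hb, true_or, or_true, if_true, Fin.val_castSucc, Fin.val_succ, pow_succ]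
    ring
  refine exists_root_hasLeadingTerm (b := b) (N := m k.castSucc + e * k)
    (D := y₀ ^ (k : ℕ) * A k.succ) (fun j ↦ ?_) ?_ (mul_ne_zero (pow_ne_zero _ hy₀_ne) hright)
    (by rw [hedge, hlin, mul_zero])
  · have hj : HasLeadingTerm (fun t ↦ t ^ (e * (j : ℕ)) * c j t) (A j) (e * j + m j) := by
      simpa using (hc j).const_mul_pow_mul 1 (e * j)
    by_cases hjk : j = k.castSucc ∨ j = k.succ
    · have hexp : m k.castSucc + e * k = e * j + m j := by
        rcases hjk with rfl | rfl
        · rw [Fin.val_castSucc, add_comm]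
        · rw [hslope, Fin.val_succ]; ring
      simpa only [hb, if_pos hjk, hexp] using hj
    · simp only [hb, if_neg hjk]
      rw [not_or] at hjk
      exact hj.of_lt (by linarith [habove j hjk.1 hjk.2])
  · simp only [hedge]
    refine ((hasDerivAt_pow (k : ℕ) y₀).fun_mul
      (((hasDerivAt_id' y₀).const_mul (A k.succ)).const_add (A k.castSucc))).congr_deriv ?_
    rw [hlin, mul_zero, zero_add, mul_one]

/-- The exponential polynomial `∑ᵢ pᵢ(t) eⁱᵗ`, where the coefficients `pᵢ` are arbitrary functions
of `t`. -/
noncomputable def expPoly {n : ℕ} (p : ℝ → Fin n → ℝ) (t : ℝ) : ℝ :=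
  ∑ i, p t i * exp t ^ (i : ℕ)

theorem exp_pow_sub_sum_isBigO (k n : ℕ) :
    (fun t ↦ exp t ^ k - ∑ l ∈ range n, (k * t) ^ l / l.factorial) =O[𝓝 0] fun t ↦ t ^ n := by
  have hlim : Tendsto (fun t : ℝ ↦ k * t) (𝓝 0) (𝓝 0) := by
    simpa using (continuous_const_mul (k : ℝ)).tendsto 0
  have htaylor := (Real.exp_sub_sum_range_isBigO_pow n).comp_tendsto hlim
  simp only [Function.comp_def, Real.exp_nat_mul, mul_pow (k : ℝ) _ n] at htaylor
  simpa only [mul_pow] using htaylor.trans (isBigO_const_mul_self _ _ _)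

theorem hasLeadingTerm_expPoly {n m : ℕ} {p : ℝ → Fin n → ℝ} {q : ℝ → ℝ} {A : ℝ}
    (hp : Continuous p) (hq : Continuous q)
    (h : ∀ t, ∑ i, p t i * ∑ l ∈ range (m + 1), (i * t) ^ l / l.factorial =
      A * t ^ m + t ^ (m + 1) * q t) :
    HasLeadingTerm (expPoly p) A m := by
  have hbdd : ∀ {f : ℝ → ℝ}, Continuous f → f =O[𝓝 0] fun _ ↦ (1 : ℝ) := fun hf ↦
    (hf.tendsto 0).isBigO_one ℝ
  have htail : (fun t ↦ ∑ i, p t i * (exp t ^ (i : ℕ) -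
      ∑ l ∈ range (m + 1), (i * t) ^ l / l.factorial)) =O[𝓝 0] fun t ↦ t ^ (m + 1) :=
    .fun_sum fun i _ ↦ by
      simpa using (hbdd (f := (p · i)) (by fun_prop)).mul (exp_pow_sub_sum_isBigO i (m + 1))
  have hrest : (fun t ↦ t ^ (m + 1) * q t) =O[𝓝 0] fun t ↦ t ^ (m + 1) := by
    simpa using (isBigO_refl (fun t : ℝ ↦ t ^ (m + 1)) _).mul (hbdd hq)
  refine ((htail.add hrest).mono nhdsWithin_le_nhds).congr_left fun t ↦ ?_
  simp only [mul_sub, sum_sub_distrib, h, expPoly]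
  ring

/-- Row `j` holds the coefficients, as a polynomial in `eᵗ`, of the factor multiplying
`d³ (-s)⁴⁻ʲ xʲ` in `det (x N - s d)`: the sum of the principal minors of `N` of size `j`, divided
by `dʲ⁻¹` (for `j = 0`, the factor is `d` itself). -/
def pencilCoeff (t : ℝ) : Matrix (Fin 5) (Fin 4) ℝ :=
  !![1 - 2 * t + t ^ 2, -1, 0, 0;
     3 - t - t ^ 2 + t ^ 3, -t - t ^ 2 + t ^ 3, -3, 0;
     -3 + 10 * t - 12 * t ^ 2 + 5 * t ^ 3 - t ^ 4, 12 - 4 * t + 7 * t ^ 2 - 2 * t ^ 3 + t ^ 4,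
       -7 + 2 * t - 2 * t ^ 2 + t ^ 3, -2;
     -6 - 3 * t ^ 2 - t ^ 4, 6 + 6 * t ^ 2 - 3 * t ^ 3, 6 + 9 * t ^ 2 - 3 * t ^ 3 + t ^ 4, -6;
     4, -12 - 12 * t ^ 2 - 4 * t ^ 3 - t ^ 4, 12 + 12 * t ^ 2 - 4 * t ^ 3 + t ^ 4, -4]

theorem det_smul_NN_sub (t x s : ℝ) :
    (x • NN t - (s * dd t) • (1 : Matrix (Fin 4) (Fin 4) ℝ)).det = dd t ^ 3 *
      ∑ j : Fin 5, (-s) ^ (j.rev : ℕ) * expPoly (pencilCoeff · j) t * x ^ (j : ℕ) := by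
  unfold NN dd expPoly
  generalize exp t = e
  simp [Matrix.det_succ_row_zero, Fin.sum_univ_succ, Fin.succAbove, Matrix.submatrix,
    Matrix.one_apply, pencilCoeff]
  ring

theorem dd_mul_det_smul_Lam_sub {t : ℝ} (ht : dd t ≠ 0) (x s : ℝ) :
    dd t * (x • Lam t - s • (1 : Matrix (Fin 4) (Fin 4) ℝ)).det =
      ∑ j : Fin 5, (-s) ^ (j.rev : ℕ) * expPoly (pencilCoeff · j) t * x ^ (j : ℕ) := by
  have hscale : x • Lam t - s • (1 : Matrix (Fin 4) (Fin 4) ℝ) =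
      (dd t)⁻¹ • (x • NN t - (s * dd t) • 1) := by
    rw [Lam, smul_sub, smul_smul, smul_smul, smul_smul, one_div, mul_comm x]
    congr 2
    field_simp
  rw [hscale, det_smul, det_smul_NN_sub, Fintype.card_fin]
  field_simp

theorem dd_eq_expPoly : dd = expPoly (pencilCoeff · 0) := by
  ext t
  simp [dd, expPoly, pencilCoeff, Fin.sum_univ_four]
  ring

theorem continuous_pencilCoeff_apply (j : Fin 5) : Continuous (pencilCoeff · j) := by
  have h : Continuous pencilCoeff := by unfold pencilCoeff; fun_prop
  exact (continuous_apply j).comp h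

/-- The polynomial left over, after extracting the leading term and a power of `t`, when each `eⁱᵗ`
in the exponential polynomials of `pencilCoeff` is replaced by its Taylor polynomial. -/
noncomputable def pencilRemainder (t : ℝ) : Fin 5 → ℝ :=
  ![1, -3 + t + t ^ 2, 9 - t / 2 + 2 * t ^ 2 + t ^ 3 / 2,
    15 / 2 + 15 / 4 * t - 19 / 24 * t ^ 2 + 2 / 3 * t ^ 3,
    41 / 672 + 251 / 15120 * t + 3 / 4480 * t ^ 2 + 73 / 51840 * t ^ 3]

theorem sum_pencilCoeff_mul_taylor (j : Fin 5) (t : ℝ) :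
    ∑ i, pencilCoeff t j i * ∑ l ∈ range (![1, 1, 2, 4, 9] j + 1), (i * t) ^ l / l.factorial =
      ![-3, -8, -24, -4, -1 / 2160] j * t ^ ![1, 1, 2, 4, 9] j +
        t ^ (![1, 1, 2, 4, 9] j + 1) * pencilRemainder t j := by
  fin_cases j <;>
  · simp [pencilCoeff, pencilRemainder, Fin.sum_univ_four, sum_range_succ, Nat.factorial]
    ring

theorem hasLeadingTerm_expPoly_pencilCoeff (j : Fin 5) :
    HasLeadingTerm (expPoly (pencilCoeff · j)) (![-3, -8, -24, -4, -1 / 2160] j)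
      (![1, 1, 2, 4, 9] j) := by
  have hq : Continuous pencilRemainder := by unfold pencilRemainder; fun_prop
  exact hasLeadingTerm_expPoly (continuous_pencilCoeff_apply j) ((continuous_apply j).comp hq)
    (sum_pencilCoeff_mul_taylor j)

theorem eventually_dd_ne_zero : ∀ᶠ t in 𝓝[>] 0, dd t ≠ 0 := by
  rw [dd_eq_expPoly]
  exact (hasLeadingTerm_expPoly_pencilCoeff 0).eventually_ne_zero (by norm_num)

theorem eventually_isUnit_Lam : ∀ᶠ t in 𝓝[>] 0, IsUnit (Lam t) := by
  filter_upwards [eventually_dd_ne_zero,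
    (hasLeadingTerm_expPoly_pencilCoeff 4).eventually_ne_zero (by simp)] with t hdd hlast
  have hdet : dd t * (Lam t).det = expPoly (pencilCoeff · 4) t := by
    simpa [Fin.sum_univ_succ] using dd_mul_det_smul_Lam_sub hdd 1 0
  rw [isUnit_iff_isUnit_det, isUnit_iff_ne_zero]
  exact right_ne_zero_of_mul (hdet.trans_ne hlast)

/-- The coefficient of `xʲ` in `d det(Λ) χ_Y(x) = d det (x Λ - t⁵)`. -/
noncomputable def charpolyYCoeff (j : Fin 5) (t : ℝ) : ℝ :=
  (-t ^ 5) ^ (j.rev : ℕ) * expPoly (pencilCoeff · j) t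

theorem isRoot_charpoly_Y {t x : ℝ} (hLam : IsUnit (Lam t))
    (hx : ∑ j, charpolyYCoeff j t * x ^ (j : ℕ) = 0) : (Y t).charpoly.IsRoot x := by
  have hdd : dd t ≠ 0 := fun h ↦ hLam.ne_zero (by simp [Lam, h])
  have hdet : (Lam t).det ≠ 0 := ((isUnit_iff_isUnit_det _).1 hLam).ne_zero
  have hpencil : (x • Lam t - t ^ 5 • (1 : Matrix (Fin 4) (Fin 4) ℝ)).det = 0 :=
    (mul_eq_zero.1 ((dd_mul_det_smul_Lam_sub hdd x (t ^ 5)).trans hx)).resolve_left hdd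
  rw [← eval_charpoly_smul_inv_mul_det hLam] at hpencil
  exact (mul_eq_zero.1 hpencil).resolve_right hdet

theorem hasLeadingTerm_charpolyYCoeff (j : Fin 5) :
    HasLeadingTerm (charpolyYCoeff j) (![-3, 8, -24, 4, -1 / 2160] j)
      (![21, 16, 12, 9, 9] j) := by
  have h := (hasLeadingTerm_expPoly_pencilCoeff j).const_mul_pow_mul
    ((-1) ^ (j.rev : ℕ)) (5 * (j.rev : ℕ))
  have hA : (-1 : ℝ) ^ (j.rev : ℕ) * ![-3, -8, -24, -4, -1 / 2160] j =
      ![-3, 8, -24, 4, -1 / 2160] j := by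
    fin_cases j <;> norm_num [Fin.rev]
  have hm : 5 * (j.rev : ℕ) + ![1, 1, 2, 4, 9] j = ![21, 16, 12, 9, 9] j := by
    fin_cases j <;> rfl
  simp only [hA, hm, pow_mul, ← mul_pow, neg_one_mul] at h
  exact h

theorem exists_eigenvalue_branch (i : Fin 4) :
    ∃ x : ℝ → ℝ, HasLeadingTerm x (![8640, 6, 1 / 3, 3 / 8] i) (![0, 3, 4, 5] i) ∧
      ∀ᶠ t in 𝓝[>] 0, ∑ j, charpolyYCoeff j t * x t ^ (j : ℕ) = 0 := by
  have hratio : -![-3, 8, -24, 4, -1 / 2160] i.rev.castSucc /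
      ![-3, 8, -24, 4, -1 / 2160] i.rev.succ = (![8640, 6, 1 / 3, 3 / 8] i : ℝ) := by
    fin_cases i <;> norm_num [Fin.rev, Fin.succ]
  rw [← hratio]
  refine exists_root_of_newtonPolygon_edge hasLeadingTerm_charpolyYCoeff ?_ ?_ ?_ ?_
  · fin_cases i <;> simp
  · fin_cases i <;> simp
  · fin_cases i <;> rfl
  · fin_cases i <;> decide

theorem eigenvalue_expansions :
    ∃ δ > (0:ℝ), ∃ C > (0:ℝ), ∀ t ∈ Set.Ioo (0:ℝ) δ,
      IsUnit (Lam t) ∧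
      ∃ lam : Fin 4 → ℝ,
        (∀ i j : Fin 4, i ≤ j → lam j ≤ lam i) ∧
        (Y t).charpoly = ∏ i : Fin 4, (Polynomial.X - Polynomial.C (lam i)) ∧
        |lam 0 - 8640| ≤ C * t ∧
        |lam 1 - 6*t^3| ≤ C * t^4 ∧
        |lam 2 - t^4/3| ≤ C * t^5 ∧
        |lam 3 - 3*t^5/8| ≤ C * t^6 := by
  choose x hlead hroot using exists_eigenvalue_branch
  obtain ⟨C, hC, hbound⟩ := HasLeadingTerm.exists_abs_sub_le hlead
  have hanti : ∀ᶠ t in 𝓝[>] 0, StrictAnti (x · t) :=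
    HasLeadingTerm.eventually_strictAnti hlead (fun i ↦ by fin_cases i <;> simp)
      (by unfold StrictMono; decide)
  obtain ⟨δ, hδ, hsub⟩ := mem_nhdsGT_iff_exists_Ioo_subset.1
    (eventually_isUnit_Lam.and <| hanti.and <| hbound.and <| eventually_all.2 hroot)
  refine ⟨δ, hδ, C, hC, fun t ht ↦ ?_⟩
  obtain ⟨hLam, hanti_t, hbound_t, hroot_t⟩ := hsub ht
  refine ⟨hLam, (x · t), fun i j hij ↦ hanti_t.antitone hij,
    charpoly_eq_prod_of_injective rfl hanti_t.injective
      fun i ↦ isRoot_charpoly_Y hLam (hroot_t i), ?_, ?_, ?_, ?_⟩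
  · simpa using hbound_t 0
  · simpa using hbound_t 1
  · simpa [div_eq_inv_mul] using hbound_t 2
  · simpa [mul_div_right_comm] using hbound_t 3
end

section
/- Let Λ(t) be the explicit real symmetric 4×4 matrix described in the context. There exists δ > 0 such that for all t ∈ (0, δ) the matrix Λ(t) is positive definite (hence invertible, with positive definite inverse). -/
set_option autoImplicit false

open Real Matrix

/-!
Write `Λ(t)` in `2 × 2` blocks and let `q` be a square root of `eᵗ`. The lower right block is `q²`
times the upper left one and the off-diagonal blocks coincide, so
`Λ(t) = [[P + Q, q (P - Q)], [q (P - Q), q² (P + Q)]] = Tᵀ diag(P, Q) T` with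
`T = [[1, q], [1, -q]]`. It remains to see that the two symmetric `2 × 2` matrices `P` and `Q`,
which are exchanged by `q ↦ -q`, are positive definite. Put `t = 4 x` and `q = e²ˣ`. Since
`d(t) = -(q - 1 + t) (q + 1 - t)`, one factor of `d` cancels in each of them, and positivity of
their determinants becomes
`x cosh x < sinh x cosh² x + 2 x² sinh x` and `2 x² < sinh² x + x tanh x`,
of which the second is the hyperbolic Wilker inequality.
-/

section BlockMatrix

variable {m n R K : Type*}

lemma posDef_fromBlocks_zero [Finite m] [Finite n] [Ring R] [PartialOrder R] [StarRing R]
    [IsOrderedAddMonoid R] {P : Matrix m m R} {Q : Matrix n n R} (hP : P.PosDef) (hQ : Q.PosDef) :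
    (fromBlocks P 0 0 Q).PosDef := by
  cases nonempty_fintype m
  cases nonempty_fintype n
  refine .of_dotProduct_mulVec_pos
    (hP.isHermitian.fromBlocks conjTranspose_zero hQ.isHermitian) fun x hx => ?_
  obtain ⟨u, v, rfl⟩ : ∃ u v, x = Sum.elim u v := ⟨_, _, (Sum.elim_comp_inl_inr x).symm⟩
  have hform : star (Sum.elim u v) ⬝ᵥ (fromBlocks P 0 0 Q *ᵥ Sum.elim u v) =
      star u ⬝ᵥ (P *ᵥ u) + star v ⬝ᵥ (Q *ᵥ v) := by
    simp [fromBlocks_mulVec, dotProduct, Fintype.sum_sum_type]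
  rw [hform]
  by_cases hu : u = 0
  · have hv : v ≠ 0 := fun hv => hx (by simp [hu, hv])
    exact add_pos_of_nonneg_of_pos (hP.posSemidef.dotProduct_mulVec_nonneg u)
      (hQ.dotProduct_mulVec_pos hv)
  · exact add_pos_of_pos_of_nonneg (hP.dotProduct_mulVec_pos hu)
      (hQ.posSemidef.dotProduct_mulVec_nonneg v)

lemma posDef_fromBlocks_add_sub [Finite n] [Field K] [NeZero (2 : K)] [PartialOrder K]
    [StarRing K] [IsOrderedAddMonoid K] {P Q : Matrix n n K} (hP : P.PosDef) (hQ : Q.PosDef)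
    {c : K} (hc : c ≠ 0) :
    (fromBlocks (P + Q) (c • (P - Q)) (star c • (P - Q)) ((star c * c) • (P + Q))).PosDef := by
  classical
  cases nonempty_fintype n
  let T : Matrix (n ⊕ n) (n ⊕ n) K := fromBlocks 1 (c • 1) 1 (-c • 1)
  have hT : Function.Injective T.mulVec := by
    refine (injective_iff_map_eq_zero T.mulVecLin).2 fun x hx => ?_
    have hadd (i : n) : x (.inl i) + c * x (.inr i) = 0 := by
      simpa [T, fromBlocks_mulVec, smul_mulVec] using congrFun hx (.inl i)
    have hsub (i : n) : x (.inl i) - c * x (.inr i) = 0 := by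
      simpa [T, fromBlocks_mulVec, smul_mulVec, neg_mulVec, ← sub_eq_add_neg]
        using congrFun hx (.inr i)
    ext (i | i)
    · refine (mul_eq_zero.1 ?_).resolve_left (two_ne_zero (α := K))
      linear_combination hadd i + hsub i
    · refine (mul_eq_zero.1 ?_).resolve_left (mul_ne_zero (two_ne_zero (α := K)) hc)
      linear_combination hadd i - hsub i
  have hcongr : Tᴴ * fromBlocks P 0 0 Q * T =
      fromBlocks (P + Q) (c • (P - Q)) (star c • (P - Q)) ((star c * c) • (P + Q)) := by
    simp only [T, fromBlocks_conjTranspose, fromBlocks_multiply]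
    congr 1 <;> simp [smul_smul, smul_add, sub_eq_add_neg, mul_comm]
  exact hcongr ▸ (posDef_fromBlocks_zero hP hQ).conjTranspose_mul_mul_same hT

end BlockMatrix

lemma posDef_fin_two {a b c : ℝ} (hc : 0 < c) (hdet : 0 < a * c - b ^ 2) :
    !![a, b; b, c].PosDef := by
  refine .of_dotProduct_mulVec_pos (by ext i j; fin_cases i <;> fin_cases j <;> rfl)
    fun x hx => ?_
  have hform : star x ⬝ᵥ (!![a, b; b, c] *ᵥ x) =
      ((b * x 0 + c * x 1) ^ 2 + (a * c - b ^ 2) * x 0 ^ 2) / c := by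
    simp only [dotProduct, mulVec, Fin.sum_univ_two, Pi.star_apply, star_trivial, of_apply,
      cons_val_zero, cons_val_one]
    field_simp
    ring
  rw [hform]
  refine div_pos ?_ hc
  by_cases h0 : x 0 = 0
  · have h1 : x 1 ≠ 0 := fun h1 => hx (by ext i; fin_cases i <;> assumption)
    have : 0 < (c * x 1) ^ 2 := by positivity
    simpa [h0] using this
  · have : 0 < x 0 ^ 2 := by positivity
    positivity

lemma exp_two_mul_sub_one (x : ℝ) : exp (2 * x) - 1 = 2 * exp x * sinh x := by
  rw [sinh_eq, two_mul, exp_add, exp_neg]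
  field_simp

lemma exp_two_mul_add_one (x : ℝ) : exp (2 * x) + 1 = 2 * exp x * cosh x := by
  rw [cosh_eq, two_mul, exp_add, exp_neg]
  field_simp

lemma four_mul_lt_exp_two_mul_add_one (x : ℝ) : 4 * x < exp (2 * x) + 1 := by
  rw [two_mul, exp_add]
  nlinarith [add_one_le_exp x, sq_nonneg (exp x - 2)]

lemma pos_of_hasDerivAt_pos {f f' : ℝ → ℝ} (hf : ∀ x, 0 ≤ x → HasDerivAt f (f' x) x) (h0 : f 0 = 0)
    (hpos : ∀ x, 0 < x → 0 < f' x) {x : ℝ} (hx : 0 < x) : 0 < f x := by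
  have hmono : StrictMonoOn f (Set.Ici 0) :=
    strictMonoOn_of_deriv_pos (convex_Ici 0) (fun y hy => (hf y hy).continuousAt.continuousWithinAt)
      fun y hy => by
        rw [interior_Ici] at hy
        exact (hf y (le_of_lt hy)).deriv ▸ hpos y hy
  exact h0 ▸ hmono Set.self_mem_Ici hx.le hx

lemma hasDerivAt_tanh (x : ℝ) : HasDerivAt tanh (1 / cosh x ^ 2) x := by
  rw [funext tanh_eq_sinh_div_cosh]
  refine ((hasDerivAt_sinh x).div (hasDerivAt_cosh x) (cosh_pos x).ne').congr_deriv ?_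
  rw [← cosh_sq_sub_sinh_sq x]
  ring

/-- The right side is the second derivative of `sinh² x + x tanh x - 2 x²`. Bounding `x` by
`sinh x cosh x` in its negative term leaves exactly `4 sinh⁴ x / cosh² x`. -/
lemma wilker_second_deriv_pos {x : ℝ} (hx : 0 < x) :
    0 < 2 * (cosh x ^ 2 + sinh x ^ 2) + 2 / cosh x ^ 2 - 2 * x * sinh x / cosh x ^ 3 - 4 := by
  have hs : x < sinh x := self_lt_sinh_iff.2 hx
  have hc : 1 ≤ cosh x := one_le_cosh x
  have hxs : x * sinh x ≤ sinh x ^ 2 * cosh x := by nlinarith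
  have hbound : 2 * x * sinh x / cosh x ^ 3 ≤ 2 * sinh x ^ 2 / cosh x ^ 2 := by
    rw [div_le_div_iff₀ (by positivity) (by positivity)]
    nlinarith [mul_le_mul_of_nonneg_right hxs (sq_nonneg (cosh x))]
  have hsq : 2 * (cosh x ^ 2 + sinh x ^ 2) + 2 / cosh x ^ 2 - 2 * sinh x ^ 2 / cosh x ^ 2 - 4 =
      4 * sinh x ^ 4 / cosh x ^ 2 := by
    have hcs : cosh x ^ 2 = sinh x ^ 2 + 1 := cosh_sq x
    have : sinh x ^ 2 + 1 ≠ 0 := by positivity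
    rw [hcs]
    field_simp
    ring
  have : 0 < sinh x := hx.trans hs
  have : 0 < 4 * sinh x ^ 4 / cosh x ^ 2 := by positivity
  linarith

/-- The hyperbolic Wilker inequality `(sinh x / x)² + tanh x / x > 2`, cleared of denominators. -/
lemma two_mul_sq_lt_sinh_sq_add_mul_tanh {x : ℝ} (hx : 0 < x) :
    2 * x ^ 2 < sinh x ^ 2 + x * tanh x := by
  have hderiv (y : ℝ) : HasDerivAt (fun y => sinh y ^ 2 + y * tanh y - 2 * y ^ 2)
      (2 * sinh y * cosh y + (tanh y + y / cosh y ^ 2) - 4 * y) y := by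
    refine ((((hasDerivAt_sinh y).pow 2).add ((hasDerivAt_id y).mul (hasDerivAt_tanh y))).sub
      (((hasDerivAt_id y).pow 2).const_mul 2)).congr_deriv ?_
    simp only [id]
    ring
  have hderiv₂ (y : ℝ) : HasDerivAt
      (fun y => 2 * sinh y * cosh y + (tanh y + y / cosh y ^ 2) - 4 * y)
      (2 * (cosh y ^ 2 + sinh y ^ 2) + 2 / cosh y ^ 2 - 2 * y * sinh y / cosh y ^ 3 - 4) y := by
    have hc : cosh y ≠ 0 := (cosh_pos y).ne'
    refine (((((hasDerivAt_sinh y).const_mul 2).mul (hasDerivAt_cosh y)).add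
      ((hasDerivAt_tanh y).add ((hasDerivAt_id y).div ((hasDerivAt_cosh y).pow 2)
        (pow_ne_zero 2 hc)))).sub ((hasDerivAt_id y).const_mul 4)).congr_deriv ?_
    simp only [id, Pi.pow_apply]
    field_simp
    ring
  have hderiv_pos (y : ℝ) (hy : 0 < y) :
      0 < 2 * sinh y * cosh y + (tanh y + y / cosh y ^ 2) - 4 * y :=
    pos_of_hasDerivAt_pos (fun y _ => hderiv₂ y) (by simp) (fun _ => wilker_second_deriv_pos) hy
  exact sub_pos.1 (pos_of_hasDerivAt_pos (fun y _ => hderiv y) (by simp) hderiv_pos hx)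

/-- The upper left `2 × 2` block of `NN t`; the lower right block is `exp t` times it. -/
noncomputable def diagBlock (t : ℝ) : Matrix (Fin 2) (Fin 2) ℝ :=
  !![-2 * exp t + 2 - 2 * t ^ 2 + t ^ 3, t * (t - 2);
     t * (t - 2), -exp t + 1 - t + t ^ 2]

/-- The upper right and the lower left `2 × 2` block of `NN t`. -/
noncomputable def crossBlock (t : ℝ) : Matrix (Fin 2) (Fin 2) ℝ :=
  !![4 * t * exp t - 4 * t + 3 * t ^ 2 - t ^ 3 - t ^ 2 * exp t - 2 * exp t + 2,
       t * (t - 1 - exp t);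
     t * (t - 1 - exp t), -exp t + 1 - t]

/-- The block `(1 / (2 d(t))) • (diagBlock t + q⁻¹ • crossBlock t)` of `Λ(t)` after
block-diagonalization, for either square root `q` of `exp t`. The factor `q + 1 - t` of
`d(t) = -(q - 1 + t) (q + 1 - t)` has been cancelled. -/
noncomputable def parityBlock (t q : ℝ) : Matrix (Fin 2) (Fin 2) ℝ :=
  (1 / (2 * (q * (q - 1 + t)))) •
    !![(q - 1) * (2 * q + t ^ 2 - 2 * t + 2), t * (q + 1);
       t * (q + 1), q ^ 2 + t * q - 1]

lemma NN_submatrix_eq_fromBlocks (t : ℝ) :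
    (NN t).submatrix finSumFinEquiv finSumFinEquiv =
      fromBlocks (diagBlock t) (crossBlock t) (crossBlock t) (exp t • diagBlock t) := by
  ext (i | i) (j | j) <;> fin_cases i <;> fin_cases j <;> try rfl
  all_goals exact mul_comm _ _

lemma parityBlock_neg (t q : ℝ) :
    parityBlock t (-q) = (1 / (2 * (q * (q + 1 - t)))) •
      !![(q + 1) * (2 * q - t ^ 2 + 2 * t - 2), t * (1 - q);
         t * (1 - q), q ^ 2 - t * q - 1] := by
  rw [parityBlock]
  congrm (1 / ?_) • !![?_, ?_; ?_, ?_] <;> ring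

section SquareRoot

variable {t q : ℝ}

lemma dd_eq_neg_mul (hq : q ^ 2 = exp t) : dd t = -((q - 1 + t) * (q + 1 - t)) := by
  rw [dd, ← hq]
  ring

lemma parityBlock_add_neg (hq : q ^ 2 = exp t) (hdd : dd t ≠ 0) :
    parityBlock t q + parityBlock t (-q) = (1 / dd t) • diagBlock t := by
  have hq0 : q ≠ 0 := pow_ne_zero_iff two_ne_zero |>.1 (hq ▸ exp_ne_zero t)
  rw [dd_eq_neg_mul hq] at hdd ⊢
  obtain ⟨hp, hm⟩ := mul_ne_zero_iff.1 (neg_ne_zero.1 hdd)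
  rw [parityBlock_neg, parityBlock, diagBlock, ← hq]
  simp only [smul_of, smul_cons, smul_empty, smul_eq_mul, of_add_of, add_cons, head_cons, tail_cons,
    empty_add_empty]
  congrm !![?_, ?_; ?_, ?_] <;> field_simp <;> ring

lemma smul_parityBlock_sub_neg (hq : q ^ 2 = exp t) (hdd : dd t ≠ 0) :
    q • (parityBlock t q - parityBlock t (-q)) = (1 / dd t) • crossBlock t := by
  have hq0 : q ≠ 0 := pow_ne_zero_iff two_ne_zero |>.1 (hq ▸ exp_ne_zero t)
  rw [dd_eq_neg_mul hq] at hdd ⊢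
  obtain ⟨hp, hm⟩ := mul_ne_zero_iff.1 (neg_ne_zero.1 hdd)
  rw [parityBlock_neg, parityBlock, crossBlock, ← hq]
  simp only [smul_of, smul_cons, smul_empty, smul_eq_mul, of_sub_of, sub_cons, head_cons, tail_cons,
    empty_sub_empty]
  congrm !![?_, ?_; ?_, ?_] <;> field_simp <;> ring

lemma Lam_submatrix_eq_fromBlocks (hq : q ^ 2 = exp t) (hdd : dd t ≠ 0) :
    (Lam t).submatrix finSumFinEquiv finSumFinEquiv = fromBlocks
      (parityBlock t q + parityBlock t (-q)) (q • (parityBlock t q - parityBlock t (-q)))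
      (q • (parityBlock t q - parityBlock t (-q)))
      ((q * q) • (parityBlock t q + parityBlock t (-q))) := by
  rw [parityBlock_add_neg hq hdd, smul_parityBlock_sub_neg hq hdd, Lam, submatrix_smul,
    Pi.smul_apply, Pi.smul_apply, NN_submatrix_eq_fromBlocks, fromBlocks_smul, ← sq, hq,
    smul_comm (exp t)]

end SquareRoot

lemma posDef_parityBlock {t q : ℝ} (hscale : 0 < q * (q - 1 + t))
    (hcorner : 0 < q ^ 2 + t * q - 1)
    (hdet : 0 < (q - 1 + t) *
      (2 * (q - 1) * (q + 1) ^ 2 - 2 * t * q * (q + 1) + t ^ 2 * q * (q - 1))) :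
    (parityBlock t q).PosDef := by
  refine (posDef_fin_two hcorner (hdet.trans_eq ?_)).smul (by positivity)
  ring

lemma posDef_parityBlock_exp {x : ℝ} (hx : 0 < x) :
    (parityBlock (4 * x) (exp (2 * x))).PosDef := by
  have hq : 1 < exp (2 * x) := one_lt_exp_iff.2 (by positivity)
  have hsinh_cosh : x * cosh x < sinh x * cosh x ^ 2 + 2 * x ^ 2 * sinh x := by
    have : x < sinh x := self_lt_sinh_iff.2 hx
    have : 1 ≤ cosh x := one_le_cosh x
    calc x * cosh x ≤ sinh x * cosh x ^ 2 := by gcongr; nlinarith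
      _ < sinh x * cosh x ^ 2 + 2 * x ^ 2 * sinh x := by
        have : 0 < sinh x := by positivity
        linarith [show 0 < 2 * x ^ 2 * sinh x by positivity]
  have hscale : 0 < exp (2 * x) - 1 + 4 * x := by linarith
  refine posDef_parityBlock (by positivity) (by nlinarith) (mul_pos hscale ?_)
  have hpos := mul_pos (by positivity : 0 < 16 * exp x ^ 3) (sub_pos.2 hsinh_cosh)
  refine hpos.trans_eq ?_
  rw [exp_two_mul_sub_one, exp_two_mul_add_one, two_mul x, exp_add]
  ring

lemma posDef_parityBlock_neg_exp {x : ℝ} (hx : 0 < x) :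
    (parityBlock (4 * x) (-exp (2 * x))).PosDef := by
  have hwilker : 2 * x ^ 2 * cosh x < sinh x ^ 2 * cosh x + x * sinh x := by
    have hc : 0 < cosh x := cosh_pos x
    have := mul_lt_mul_of_pos_right (two_mul_sq_lt_sinh_sq_add_mul_tanh hx) hc
    rwa [add_mul, mul_assoc x, tanh_eq_sinh_div_cosh, div_mul_cancel₀ _ hc.ne'] at this
  have hscale : 0 < exp (2 * x) + 1 - 4 * x := sub_pos.2 (four_mul_lt_exp_two_mul_add_one x)
  have hcorner : 4 * x * exp (2 * x) < exp (2 * x) ^ 2 - 1 := by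
    have hsinh : 2 * x < sinh (2 * x) := self_lt_sinh_iff.2 (by positivity)
    calc 4 * x * exp (2 * x) = 2 * exp (2 * x) * (2 * x) := by ring
      _ < 2 * exp (2 * x) * sinh (2 * x) := by gcongr
      _ = exp (2 * x) ^ 2 - 1 := by rw [← exp_two_mul_sub_one, ← exp_nat_mul]; norm_num
  refine posDef_parityBlock (by nlinarith [exp_pos (2 * x)]) (by linarith) ?_
  have hfactor : 16 * exp x ^ 3 * (sinh x ^ 2 * cosh x + x * sinh x - 2 * x ^ 2 * cosh x) =
      2 * (exp (2 * x) + 1) * (exp (2 * x) - 1) ^ 2 + 8 * x * exp (2 * x) * (exp (2 * x) - 1) -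
        16 * x ^ 2 * exp (2 * x) * (exp (2 * x) + 1) := by
    rw [exp_two_mul_sub_one, exp_two_mul_add_one, two_mul x, exp_add]
    ring
  have hpos := mul_pos (by positivity : 0 < 16 * exp x ^ 3) (sub_pos.2 hwilker)
  refine (mul_pos hscale (hfactor ▸ hpos)).trans_eq ?_
  ring

theorem Lam_posDef_near_zero_general {t : ℝ} (ht : 0 < t) : (Lam t).PosDef := by
  obtain ⟨x, rfl⟩ : ∃ x, t = 4 * x := ⟨t / 4, by ring⟩
  have hx : 0 < x := by linarith
  have hsqrt : exp (2 * x) ^ 2 = exp (4 * x) := by rw [← exp_nat_mul]; ring_nf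
  have hdd : dd (4 * x) ≠ 0 := by
    rw [dd_eq_neg_mul hsqrt, neg_ne_zero]
    have hexp : 1 < exp (2 * x) := one_lt_exp_iff.2 (by positivity)
    exact mul_ne_zero (by linarith) (sub_pos.2 (four_mul_lt_exp_two_mul_add_one x)).ne'
  have hblocks := posDef_fromBlocks_add_sub (posDef_parityBlock_exp hx)
    (posDef_parityBlock_neg_exp hx) (exp_ne_zero (2 * x))
  rw [star_trivial, ← Lam_submatrix_eq_fromBlocks hsqrt hdd] at hblocks
  simpa using hblocks.submatrix finSumFinEquiv.symm.injective

theorem Lam_posDef_near_zero :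
    ∃ δ > (0:ℝ), ∀ t ∈ Set.Ioo (0:ℝ) δ, (Lam t).PosDef :=
  ⟨1, one_pos, fun _ ht => Lam_posDef_near_zero_general ht.1⟩
end
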